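/- Let C be an [n,k] linear code over F_q. Then for every 1 ≤ i ≤ k, the i-th bottom-up greedy weight of C equals the i-th bottom-up greedy weight of its matroid M_C: e_i(C) = e_i(M_C). -/

import Mathlib

open Finset
open scoped Classical

noncomputable section

/-- The rank in the matroid `M_C`: `r(X)` is the rank of the column submatrix `H_X`. -/
def colRank {F : Type*} [Field F] {m n : ℕ} (H : Matrix (Fin m) (Fin n) F)
    (X : Finset (Fin n)) : ℕ :=
  Module.finrank F (Submodule.span F ((fun j i => H i j) '' (X : Set (Fin n))))

/-- The nullity function of the matroid `M_C`: `n(X) = |X| - r(X)`. -/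
def nulC {F : Type*} [Field F] {m n : ℕ} (H : Matrix (Fin m) (Fin n) F)
    (X : Finset (Fin n)) : ℕ :=
  X.card - colRank H X

/-- The support of a word. -/
def supp {F : Type*} [Field F] {n : ℕ} (c : Fin n → F) : Finset (Fin n) :=
  Finset.univ.filter (fun i => c i ≠ 0)

/-- The support of a subcode. -/
def suppD {F : Type*} [Field F] {n : ℕ} (D : Submodule F (Fin n → F)) : Finset (Fin n) :=
  Finset.univ.filter (fun i => ∃ c ∈ D, c i ≠ 0)

/-- The weight of a subcode: the cardinality of its support. -/
def wt {F : Type*} [Field F] {n : ℕ} (D : Submodule F (Fin n → F)) : ℕ := (suppD D).card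

/-- The subcode `C(X) = {c ∈ C : Supp(c) ⊆ X}`. -/
def codeRestrict {F : Type*} [Field F] {n : ℕ} (C : Submodule F (Fin n → F))
    (X : Finset (Fin n)) : Submodule F (Fin n → F) where
  carrier := {c | c ∈ C ∧ ∀ i ∉ X, c i = 0}
  add_mem' := by
    rintro a b ⟨ha, ha0⟩ ⟨hb, hb0⟩
    exact ⟨C.add_mem ha hb, fun i hi => by simp [Pi.add_apply, ha0 i hi, hb0 i hi]⟩
  zero_mem' := ⟨C.zero_mem, fun i _ => rfl⟩
  smul_mem' := by
    rintro r a ⟨ha, ha0⟩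
    exact ⟨C.smul_mem r ha, fun i hi => by simp [Pi.smul_apply, ha0 i hi]⟩

/-- The code defined by the parity check matrix `H`: `C = {x : H x = 0}`. -/
def codeOf {F : Type*} [Field F] {m n : ℕ} (H : Matrix (Fin m) (Fin n) F) :
    Submodule F (Fin n → F) :=
  LinearMap.ker H.mulVecLin

/-- The `r`-th generalized Hamming weight of a code `C`. -/
def dC {F : Type*} [Field F] {n : ℕ} (C : Submodule F (Fin n → F)) (r : ℕ) : ℕ :=
  sInf {w | ∃ D : Submodule F (Fin n → F), D ≤ C ∧ Module.finrank F D = r ∧ wt D = w}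

/-- `D` computes `d_r(C)`: `D ⊆ C`, `dim D = r` and `wt(D) = d_r(C)`. -/
def Computes {F : Type*} [Field F] {n : ℕ} (C : Submodule F (Fin n → F)) (r : ℕ)
    (D : Submodule F (Fin n → F)) : Prop :=
  D ≤ C ∧ Module.finrank F D = r ∧ wt D = dC C r

end
noncomputable section

/-- `BUG C i` is the set of bottom-up greedy `i`-subcodes of `C`: a bottom-up greedy
`1`-subcode is a `1`-dimensional subcode of minimal weight, and a bottom-up greedy `r`-subcode
(`r ≥ 2`) is an `r`-dimensional subcode containing some bottom-up greedy `(r-1)`-subcode, of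
minimal weight among all such. -/
def BUG {F : Type*} [Field F] {n : ℕ} (C : Submodule F (Fin n → F)) :
    ℕ → Set (Submodule F (Fin n → F))
  | 0 => {⊥}
  | 1 => {D | D ≤ C ∧ Module.finrank F D = 1 ∧
      ∀ D₂ ≤ C, Module.finrank F D₂ = 1 → wt D ≤ wt D₂}
  | (r+2) => {D | D ≤ C ∧ Module.finrank F D = r + 2 ∧ (∃ D' ∈ BUG C (r+1), D' ≤ D) ∧
      ∀ D₂ ≤ C, Module.finrank F D₂ = r + 2 →
        (∃ D₂' ∈ BUG C (r+1), D₂' ≤ D₂) → wt D ≤ wt D₂}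

/-- `w` is the lexicographically smallest element of `A`. -/
def IsLexMin {k : ℕ} (A : Set (Fin k → ℕ)) (w : Fin k → ℕ) : Prop :=
  w ∈ A ∧ ∀ u ∈ A, toLex w ≤ toLex u

/-- `w` is the reverse-lexicographically smallest element of `A`. -/
def IsRevLexMin {k : ℕ} (A : Set (Fin k → ℕ)) (w : Fin k → ℕ) : Prop :=
  w ∈ A ∧ ∀ u ∈ A, toLex (w ∘ Fin.rev) ≤ toLex (u ∘ Fin.rev)

/-- The set `{e(S) : S ∈ Σ}` of cardinality-tuples of chains `σ_1 ⊊ ⋯ ⊊ σ_k` with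
`σ_i ∈ 𝒩_i` for the matroid `M_C` of the code with parity check matrix `H`. -/
def eSetC {F : Type*} [Field F] {m n : ℕ} (H : Matrix (Fin m) (Fin n) F) (k : ℕ) :
    Set (Fin k → ℕ) :=
  {u | ∃ σ : Fin k → Finset (Fin n),
    (StrictMono σ ∧ ∀ i : Fin k, nulC H (σ i) = (i : ℕ) + 1) ∧ ∀ i, (σ i).card = u i}

theorem h_colRank_mono {F : Type*} [Field F] {m n : ℕ} (H : Matrix (Fin m) (Fin n) F)
    {X Y : Finset (Fin n)} (h : X ⊆ Y) : colRank H X ≤ colRank H Y := by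
  unfold colRank
  apply Submodule.finrank_mono
  apply Submodule.span_mono
  apply Set.image_mono
  exact_mod_cast h

theorem h_nulC_eq {F : Type*} [Field F] {m n : ℕ} (H : Matrix (Fin m) (Fin n) F)
    (X : Finset (Fin n)) :
    nulC H X = Module.finrank F (codeRestrict (codeOf H) X) := by
  let L : Matrix (Fin m) X F := H.submatrix id Subtype.val
  have h1 := LinearMap.finrank_range_add_finrank_ker L.mulVecLin
  have h2 : Module.finrank F (LinearMap.range L.mulVecLin) = colRank H X := by
    rw [Matrix.range_mulVecLin]
    unfold colRank
    suffices hset : Set.range L.col = (fun j i => H i j) '' (X : Set (Fin n)) by rw [hset]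
    apply Set.ext
    intro v
    simp only [Set.mem_range, Set.mem_image]
    constructor
    · rintro ⟨j, rfl⟩
      exact ⟨j.1, by simpa using j.2, rfl⟩
    · rintro ⟨j, hj, rfl⟩
      exact ⟨⟨j, by simpa using hj⟩, rfl⟩
  have hmul : ∀ c : Fin n → F, (∀ i ∉ X, c i = 0) →
      H.mulVec c = L.mulVec (fun j => c j.1) := by
    intro c hc
    ext i
    simp only [Matrix.mulVec, dotProduct, L, Matrix.submatrix_apply, id]
    rw [Finset.sum_coe_sort X (fun j => H i j * c j)]
    symm
    apply Finset.sum_subset (Finset.subset_univ _)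
    intro j _ hj
    rw [hc j hj, mul_zero]
  let f : codeRestrict (codeOf H) X →ₗ[F] LinearMap.ker L.mulVecLin :=
    LinearMap.codRestrict _ ((LinearMap.funLeft F F (Subtype.val : X → Fin n)).comp
      (codeRestrict (codeOf H) X).subtype) (by
        rintro ⟨c, hc, hc0⟩
        rw [LinearMap.mem_ker]
        have : H.mulVec c = 0 := hc
        rw [hmul c hc0] at this
        exact this)
  have hf : Function.Bijective f := by
    constructor
    · rintro ⟨c, hc, hc0⟩ ⟨d, hd, hd0⟩ h
      apply Subtype.ext
      funext j
      by_cases hj : j ∈ X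
      · have := congrArg Subtype.val h
        exact congrFun this ⟨j, hj⟩
      · show c j = d j
        rw [hc0 j hj, hd0 j hj]
    · rintro ⟨v, hv⟩
      let c : Fin n → F := fun j => if h : j ∈ X then v ⟨j, h⟩ else 0
      have hc0 : ∀ i ∉ X, c i = 0 := fun i hi => by simp [c, hi]
      have hcv : (fun j : X => c j.1) = v := by
        funext j
        simp [c]
      refine ⟨⟨c, ?_, hc0⟩, ?_⟩
      · show H.mulVec c = 0
        rw [hmul c hc0, hcv]
        exact hv
      · apply Subtype.ext
        exact hcv
  have h3 := (LinearEquiv.ofBijective f hf).finrank_eq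
  rw [Module.finrank_fintype_fun_eq_card, Fintype.card_coe] at h1
  unfold nulC
  omega

theorem h_nulC_mono {F : Type*} [Field F] {m n : ℕ} (H : Matrix (Fin m) (Fin n) F)
    {X Y : Finset (Fin n)} (h : X ⊆ Y) : nulC H X ≤ nulC H Y := by
  rw [h_nulC_eq, h_nulC_eq]
  apply Submodule.finrank_mono
  rintro c ⟨hc, hc0⟩
  exact ⟨hc, fun i hi => hc0 i (fun hx => hi (h hx))⟩

theorem h_between {F : Type*} [Field F] {m n : ℕ} (H : Matrix (Fin m) (Fin n) F)
    {X Y : Finset (Fin n)} (h : X ⊆ Y) {a : ℕ} (ha : nulC H X ≤ a) (hb : a ≤ nulC H Y) :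
    ∃ Z, X ⊆ Z ∧ Z ⊆ Y ∧ nulC H Z = a := by
  obtain ⟨Z, hZ, hmin⟩ := Finset.exists_min_image
    (Finset.univ.filter (fun Z : Finset (Fin n) => X ⊆ Z ∧ Z ⊆ Y ∧ a ≤ nulC H Z))
    Finset.card ⟨Y, by simp [h, hb]⟩
  simp only [Finset.mem_filter, Finset.mem_univ, true_and] at hZ hmin
  obtain ⟨h1, h2, h3⟩ := hZ
  refine ⟨Z, h1, h2, ?_⟩
  by_contra hne
  have hlt : a < nulC H Z := by omega
  have hss : ¬ Z ⊆ X := fun hs => by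
    have := h_nulC_mono H hs
    omega
  obtain ⟨z, hzZ, hzX⟩ := Finset.not_subset.mp hss
  have hc := Finset.card_erase_add_one hzZ
  have hr := h_colRank_mono H (Finset.erase_subset z Z)
  have hn : a ≤ nulC H (Z.erase z) := by
    unfold nulC at *
    omega
  have := hmin (Z.erase z) ⟨Finset.subset_erase.mpr ⟨h1, hzX⟩,
    (Finset.erase_subset z Z).trans h2, hn⟩
  omega

theorem h_suppD_mono {F : Type*} [Field F] {n : ℕ} {D E : Submodule F (Fin n → F)}
    (h : D ≤ E) : suppD D ⊆ suppD E := by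
  intro i hi
  simp only [suppD, Finset.mem_filter, Finset.mem_univ, true_and] at *
  obtain ⟨c, hc, h0⟩ := hi
  exact ⟨c, h hc, h0⟩

theorem h_suppD_restrict {F : Type*} [Field F] {n : ℕ} (C : Submodule F (Fin n → F))
    (X : Finset (Fin n)) : suppD (codeRestrict C X) ⊆ X := by
  intro i hi
  simp only [suppD, Finset.mem_filter, Finset.mem_univ, true_and] at hi
  obtain ⟨c, hc, h0⟩ := hi
  by_contra hx
  exact h0 (hc.2 i hx)

theorem h_le_restrict {F : Type*} [Field F] {n : ℕ} {C D : Submodule F (Fin n → F)}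
    (hD : D ≤ C) {X : Finset (Fin n)} (hX : suppD D ⊆ X) : D ≤ codeRestrict C X := by
  intro c hc
  refine ⟨hD hc, fun i hi => ?_⟩
  by_contra h0
  apply hi
  apply hX
  simp only [suppD, Finset.mem_filter, Finset.mem_univ, true_and]
  exact ⟨c, hc, h0⟩

theorem h_suppD_bot {F : Type*} [Field F] {n : ℕ} :
    suppD (⊥ : Submodule F (Fin n → F)) = ∅ := by
  ext i
  simp [suppD]

theorem h_restrict_mono {F : Type*} [Field F] {n : ℕ} (C : Submodule F (Fin n → F))
    {X Y : Finset (Fin n)} (h : X ⊆ Y) : codeRestrict C X ≤ codeRestrict C Y :=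
  fun _ hc => ⟨hc.1, fun i hi => hc.2 i (fun hx => hi (h hx))⟩

theorem h_bug_succ {F : Type*} [Field F] {n : ℕ} (C : Submodule F (Fin n → F)) (r : ℕ)
    (D : Submodule F (Fin n → F)) :
    D ∈ BUG C (r + 1) ↔ D ≤ C ∧ Module.finrank F D = r + 1 ∧ (∃ D' ∈ BUG C r, D' ≤ D) ∧
      ∀ D₂ ≤ C, Module.finrank F D₂ = r + 1 →
        (∃ D₂' ∈ BUG C r, D₂' ≤ D₂) → wt D ≤ wt D₂ := by
  cases r with
  | zero => simp [BUG]
  | succ r => simp only [BUG, Set.mem_ofPred_eq]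

theorem h_bug_le {F : Type*} [Field F] {n : ℕ} {C : Submodule F (Fin n → F)} {r : ℕ}
    {D : Submodule F (Fin n → F)} (h : D ∈ BUG C r) : D ≤ C ∧ Module.finrank F D = r := by
  cases r with
  | zero =>
    have : D = ⊥ := by simpa [BUG] using h
    subst this
    simp
  | succ r =>
    rw [h_bug_succ] at h
    exact ⟨h.1, h.2.1⟩

theorem h_le_nul {F : Type*} [Field F] {m n : ℕ} (H : Matrix (Fin m) (Fin n) F)
    {D : Submodule F (Fin n → F)} (h : D ≤ codeOf H) :
    Module.finrank F D ≤ nulC H (suppD D) := by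
  rw [h_nulC_eq]
  exact Submodule.finrank_mono (h_le_restrict h (Finset.Subset.refl _))

theorem h_bug_nul {F : Type*} [Field F] {m n : ℕ} (H : Matrix (Fin m) (Fin n) F) (r : ℕ) :
    ∀ D ∈ BUG (codeOf H) r, nulC H (suppD D) = r := by
  induction r with
  | zero =>
    intro D h
    have : D = ⊥ := by simpa [BUG] using h
    subst this
    simp [h_suppD_bot, nulC]
  | succ r ih =>
    intro D h
    rw [h_bug_succ] at h
    obtain ⟨h1, h2, ⟨D', hD', hle⟩, hmin⟩ := h
    have h3 := h_le_nul H h1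
    have h4 := ih D' hD'
    obtain ⟨Z, hZ1, hZ2, hZ3⟩ := h_between H (h_suppD_mono hle) (a := r + 1)
      (by omega) (by omega)
    have h5 := hmin (codeRestrict (codeOf H) Z) (fun c hc => hc.1)
      (by rw [← h_nulC_eq, hZ3]) ⟨D', hD', h_le_restrict (h_bug_le hD').1 hZ1⟩
    have h6 : (suppD D).card ≤ Z.card :=
      h5.trans (Finset.card_le_card (h_suppD_restrict _ _))
    rw [← Finset.eq_of_subset_of_card_le hZ2 h6, hZ3]

/-- A chain of sets `s 0 ⊆ s 1 ⊆ ⋯ ⊆ s j` with `s t` of nullity `t`. -/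
def HChain {F : Type*} [Field F] {m n : ℕ} (H : Matrix (Fin m) (Fin n) F) (j : ℕ)
    (s : ℕ → Finset (Fin n)) : Prop :=
  (∀ t ≤ j, nulC H (s t) = t) ∧ ∀ t < j, s t ⊆ s (t + 1)

theorem h_chain_snoc {F : Type*} [Field F] {m n : ℕ} (H : Matrix (Fin m) (Fin n) F) {j : ℕ}
    {s : ℕ → Finset (Fin n)} (h : HChain H j s) {Z : Finset (Fin n)} (hZ : s j ⊆ Z)
    (hn : nulC H Z = j + 1) :
    HChain H (j + 1) (fun t => if t ≤ j then s t else Z) := by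
  refine ⟨fun t ht => ?_, fun t ht => ?_⟩
  · by_cases h' : t ≤ j
    · simp only [h', if_true]
      exact h.1 t h'
    · simp only [h', if_false]
      omega
  · by_cases h' : t < j
    · have h1 : t ≤ j := by omega
      have h2 : t + 1 ≤ j := h'
      simp only [h1, h2, if_true]
      exact h.2 t h'
    · have h1 : t = j := by omega
      subst h1
      simpa using hZ

theorem h_chain_extend {F : Type*} [Field F] {m n : ℕ} (H : Matrix (Fin m) (Fin n) F) {j : ℕ}
    {s : ℕ → Finset (Fin n)} (h : HChain H j s) (l : ℕ) (hjl : j ≤ l) :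
    l ≤ nulC H Finset.univ → ∃ s', HChain H l s' ∧ ∀ t ≤ j, s' t = s t := by
  induction l, hjl using Nat.le_induction with
  | base => exact fun _ => ⟨s, h, fun _ _ => rfl⟩
  | succ l hl ih =>
    intro hk
    obtain ⟨s', hs', he⟩ := ih (by omega)
    have := hs'.1 l le_rfl
    obtain ⟨Z, hZ1, _, hZ3⟩ := h_between H (Finset.subset_univ (s' l)) (a := l + 1)
      (by omega) hk
    refine ⟨_, h_chain_snoc H hs' hZ1 hZ3, fun t ht => ?_⟩
    have : t ≤ l := by omega
    simp only [this, if_true]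
    exact he t ht

theorem h_bug_chain {F : Type*} [Field F] {m n : ℕ} (H : Matrix (Fin m) (Fin n) F) (r : ℕ) :
    ∀ D ∈ BUG (codeOf H) r, ∃ s, HChain H r s ∧ s r = suppD D ∧
      ∀ t ≤ r, ∃ E ∈ BUG (codeOf H) t, s t = suppD E := by
  induction r with
  | zero =>
    intro D h
    refine ⟨fun _ => suppD D, ⟨fun t ht => ?_, fun t ht => by omega⟩, rfl, fun t ht => ?_⟩
    · rw [h_bug_nul H 0 D h]
      omega
    · obtain rfl : t = 0 := by omega
      exact ⟨D, h, rfl⟩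
  | succ r ih =>
    intro D h
    obtain ⟨h1, h2, ⟨D', hD', hle⟩, hmin⟩ := (h_bug_succ _ _ _).mp h
    obtain ⟨s, hs, hsr, hE⟩ := ih D' hD'
    refine ⟨_, h_chain_snoc H hs (Z := suppD D) (by rw [hsr]; exact h_suppD_mono hle)
      (h_bug_nul H _ D h), by simp, fun t ht => ?_⟩
    by_cases h' : t ≤ r
    · simp only [h', if_true]
      exact hE t h'
    · obtain rfl : t = r + 1 := by omega
      exact ⟨D, h, by simp⟩

theorem h_main {F : Type*} [Field F] {m n : ℕ} (H : Matrix (Fin m) (Fin n) F) {k : ℕ}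
    {s : ℕ → Finset (Fin n)} (hs : HChain H k s) (hs0 : s 0 = ∅)
    (hmin : ∀ i < k, ∀ s', HChain H (i + 1) s' → (∀ t ≤ i, (s' t).card = (s t).card) →
      (s (i + 1)).card ≤ (s' (i + 1)).card) (i : ℕ) :
    i ≤ k → codeRestrict (codeOf H) (s i) ∈ BUG (codeOf H) i ∧
      ∀ D ∈ BUG (codeOf H) i, wt D = (s i).card := by
  induction i using Nat.strong_induction_on with
  | _ i ih =>
  intro hi
  cases i with
  | zero =>
    constructor
    · show _ = _
      rw [hs0, eq_bot_iff]
      rintro c ⟨_, hc⟩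
      rw [Submodule.mem_bot]
      funext j
      exact hc j (by simp)
    · intro D hD
      have : D = ⊥ := by simpa [BUG] using hD
      subst this
      simp [wt, h_suppD_bot, hs0]
  | succ i =>
    have key : ∀ D₂ ≤ codeOf H, Module.finrank F D₂ = i + 1 →
        (∃ D₂' ∈ BUG (codeOf H) i, D₂' ≤ D₂) → (s (i + 1)).card ≤ wt D₂ := by
      rintro D₂ hD₂ hr ⟨D', hD', hle⟩
      obtain ⟨u, hu, hui, hE⟩ := h_bug_chain H i D' hD'
      have h1 := h_le_nul H hD₂
      have h2 := h_bug_nul H i D' hD'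
      obtain ⟨Z, hZ1, hZ2, hZ3⟩ := h_between H (h_suppD_mono hle) (a := i + 1)
        (by omega) (by omega)
      have h3 := hmin i (by omega) _ (h_chain_snoc H hu (by rw [hui]; exact hZ1) hZ3) (by
        intro t ht
        simp only [ht, if_true]
        obtain ⟨E, hEb, hEs⟩ := hE t ht
        rw [hEs]
        exact (ih t (by omega) (by omega)).2 E hEb)
      simp only [show ¬ (i + 1 ≤ i) by omega, if_false] at h3
      exact h3.trans (Finset.card_le_card hZ2)
    have hle : wt (codeRestrict (codeOf H) (s (i + 1))) ≤ (s (i + 1)).card :=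
      Finset.card_le_card (h_suppD_restrict _ _)
    have hb : codeRestrict (codeOf H) (s (i + 1)) ∈ BUG (codeOf H) (i + 1) := by
      rw [h_bug_succ]
      refine ⟨fun c hc => hc.1, by rw [← h_nulC_eq, hs.1 _ hi],
        ⟨_, (ih i (by omega) (by omega)).1, h_restrict_mono _ (hs.2 i (by omega))⟩, ?_⟩
      intro D₂ h1 h2 h3
      exact hle.trans (key D₂ h1 h2 h3)
    refine ⟨hb, fun D hD => ?_⟩
    rw [h_bug_succ] at hb hD
    have h1 := hD.2.2.2 _ hb.1 hb.2.1 hb.2.2.1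
    have h2 := key D hD.1 hD.2.1 hD.2.2.1
    omega

/-- the bottom-up greedy weights of an `[n,k]` code `C` coincide with the
bottom-up greedy weights of its matroid `M_C`: if `w = (e_1(M_C),…,e_k(M_C))` is the
lexicographic minimum of `{e(S) : S ∈ Σ}` then the weight of any bottom-up greedy
`i`-subcode of `C` is `w i`. -/
theorem statement12 {F : Type*} [Field F] [Fintype F] {m k n : ℕ} (hmk : m + k = n)
    (H : Matrix (Fin m) (Fin n) F) (hH : H.rank = m)
    (w : Fin k → ℕ) (hw : IsLexMin (eSetC H k) w) :
    ∀ i : Fin k, ∀ D ∈ BUG (codeOf H) ((i : ℕ) + 1), wt D = w i := by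
  obtain ⟨⟨σ, ⟨hmono, hnul⟩, hcard⟩, hlex⟩ := hw
  have hk : k ≤ nulC H Finset.univ := by
    have : colRank H Finset.univ ≤ m := by
      unfold colRank
      exact (Submodule.finrank_le _).trans (by simp)
    unfold nulC
    rw [Finset.card_univ, Fintype.card_fin]
    omega
  let s : ℕ → Finset (Fin n) := fun t =>
    if h : 1 ≤ t ∧ t ≤ k then σ ⟨t - 1, by omega⟩ else ∅
  have hsσ : ∀ j : Fin k, s (j + 1) = σ j := by
    intro j
    have : (1 ≤ (j : ℕ) + 1 ∧ (j : ℕ) + 1 ≤ k) := by omega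
    simp only [s, this, dif_pos, and_self]
    congr 1
  have hs0 : s 0 = ∅ := by simp [s]
  have hs : HChain H k s := by
    refine ⟨fun t ht => ?_, fun t ht => ?_⟩
    · cases t with
      | zero => simp [hs0, nulC]
      | succ t =>
        rw [hsσ ⟨t, by omega⟩, hnul]
    · cases t with
      | zero => simp [hs0]
      | succ t =>
        rw [hsσ ⟨t, by omega⟩, hsσ ⟨t + 1, ht⟩]
        exact (hmono (by simp)).le
  have hmin : ∀ i < k, ∀ s', HChain H (i + 1) s' → (∀ t ≤ i, (s' t).card = (s t).card) →
      (s (i + 1)).card ≤ (s' (i + 1)).card := by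
    intro i hi s' hs' heq
    by_contra hlt
    push Not at hlt
    obtain ⟨u, hu, hagree⟩ := h_chain_extend H hs' k hi hk
    have hmem : (fun j : Fin k => (u (j + 1)).card) ∈ eSetC H k := by
      refine ⟨fun j => u (j + 1), ⟨?_, fun j => hu.1 _ (by omega)⟩, fun _ => rfl⟩
      have hsub : ∀ a b : ℕ, a ≤ b → b ≤ k → u a ⊆ u b := by
        intro a b hab
        induction b, hab using Nat.le_induction with
        | base => exact fun _ => Finset.Subset.refl _
        | succ b _ ih => exact fun hb => (ih (by omega)).trans (hu.2 b (by omega))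
      intro a b hab
      have hab' : (a : ℕ) < b := hab
      refine lt_of_le_of_ne (hsub _ _ (by omega) (by omega)) (fun he => ?_)
      have h1 := hu.1 (a + 1) (by omega)
      have h2 := hu.1 (b + 1) (by omega)
      have he' : u (a + 1) = u (b + 1) := he
      rw [he'] at h1
      omega
    refine absurd (hlex _ hmem) (not_le_of_gt ?_)
    refine ⟨⟨i, hi⟩, fun j hj => ?_, ?_⟩
    · have hj' : (j : ℕ) < i := hj
      show (u (j + 1)).card = w j
      rw [hagree _ (by omega), heq _ (by omega), hsσ, hcard]
    · show (u (i + 1)).card < w ⟨i, hi⟩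
      rw [hagree _ le_rfl, ← hcard, ← hsσ]
      exact hlt
  intro i D hD
  rw [(h_main H hs hs0 hmin (i + 1) (by omega)).2 D hD, hsσ, hcard]

end
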